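/- Let $N \ge 1$, $0 < m < 1$ with additionally $m > \frac{N-2}{N}$ when $N \ge 3$. Suppose $u \in L^\infty(0,\infty; L^1(\mathbb{R}^N))$ and for a nonnegative $\ell \in L^1_{loc}([0,\infty))$ the identity $\int_{\mathbb{R}^N}(u(x,t)-u_0(x))\phi(x)\,dx = \int_0^t \ell(t-s)\int_{\mathbb{R}^N}|u(x,s)|^{m-1}u(x,s)\Delta\phi(x)\,dx\,ds$ holds for a.e. $t > 0$ and all $\phi \in C_0^\infty(\mathbb{R}^N)$, where $u_0 \in L^1(\mathbb{R}^N)$. Then $\int_{\mathbb{R}^N} u(x,t)\,dx = \int_{\mathbb{R}^N} u_0(x)\,dx$ for a.e. $t > 0$. -/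

import Mathlib

open Set MeasureTheory

/-- The Laplacian of `f : ℝ^N → ℝ`, as the sum of second derivatives along the
standard coordinate directions. -/
noncomputable def lap {N : ℕ} (f : EuclideanSpace ℝ (Fin N) → ℝ)
    (x : EuclideanSpace ℝ (Fin N)) : ℝ :=
  ∑ i : Fin N, iteratedDeriv 2 (fun t : ℝ => f (x + t • EuclideanSpace.single i (1:ℝ))) 0

lemma lap_bound {N : ℕ} (φ : EuclideanSpace ℝ (Fin N) → ℝ) (hφ : ContDiff ℝ (⊤ : ℕ∞) φ)
    (hc : HasCompactSupport φ) (r : ℝ) (hr : tsupport φ ⊆ Metric.closedBall 0 r) :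
    ∃ K : ℝ, 0 ≤ K ∧ ∀ x, |lap φ x| ≤ (Metric.closedBall (0 : EuclideanSpace ℝ (Fin N)) r).indicator
      (fun _ => K) x := by
  set ψ : Fin N → EuclideanSpace ℝ (Fin N) → ℝ :=
    fun i y => fderiv ℝ φ y (EuclideanSpace.single i (1:ℝ)) with hψ
  set χ : Fin N → EuclideanSpace ℝ (Fin N) → ℝ :=
    fun i y => fderiv ℝ (ψ i) y (EuclideanSpace.single i (1:ℝ)) with hχ
  have hψd : ∀ i, ContDiff ℝ (⊤ : ℕ∞) (ψ i) := fun i =>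
    (hφ.fderiv_right (m := (⊤ : ℕ∞)) (by simp)).clm_apply contDiff_const
  have hχd : ∀ i, ContDiff ℝ (⊤ : ℕ∞) (χ i) := fun i =>
    ((hψd i).fderiv_right (m := (⊤ : ℕ∞)) (by simp)).clm_apply contDiff_const
  have hline : ∀ (f : EuclideanSpace ℝ (Fin N) → ℝ), ContDiff ℝ (⊤ : ℕ∞) f → ∀ x e (t : ℝ),
      deriv (fun t : ℝ => f (x + t • e)) t = fderiv ℝ f (x + t • e) e := by
    intro f hf x e t
    have h1 : HasDerivAt (fun t : ℝ => x + t • e) e t := by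
      simpa using ((hasDerivAt_id t).smul_const e).const_add x
    have h2 := ((hf.differentiable (by simp)) (x + t • e)).hasFDerivAt
    exact (h2.comp_hasDerivAt t h1).deriv
  have hlap : ∀ x, lap φ x = ∑ i, χ i x := by
    intro x
    unfold lap
    refine Finset.sum_congr rfl fun i _ => ?_
    rw [iteratedDeriv_succ, iteratedDeriv_one]
    have : deriv (fun t : ℝ => φ (x + t • EuclideanSpace.single i (1:ℝ)))
        = fun t : ℝ => ψ i (x + t • EuclideanSpace.single i (1:ℝ)) := by
      ext t; exact hline φ hφ x _ t
    rw [this, hline _ (hψd i)]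
    simp [hχ]
  have hsψ : ∀ i, tsupport (ψ i) ⊆ tsupport φ := fun i => tsupport_fderiv_apply_subset ℝ _
  have hsχ : ∀ i, tsupport (χ i) ⊆ tsupport φ := fun i =>
    (tsupport_fderiv_apply_subset ℝ _).trans (hsψ i)
  have hb : ∀ i, ∃ C, ∀ x, ‖χ i x‖ ≤ C := fun i =>
    (hχd i).continuous.bounded_above_of_compact_support
      (hc.of_isClosed_subset (isClosed_tsupport _) (hsχ i))
  choose C hC using hb
  have hC0 : ∀ i, 0 ≤ C i := fun i => (norm_nonneg _).trans (hC i 0)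
  refine ⟨∑ i, C i, Finset.sum_nonneg fun i _ => hC0 i, fun x => ?_⟩
  rw [hlap]
  by_cases hx : x ∈ Metric.closedBall (0 : EuclideanSpace ℝ (Fin N)) r
  · rw [indicator_of_mem hx]
    exact (Finset.abs_sum_le_sum_abs _ _).trans (Finset.sum_le_sum fun i _ => hC i x)
  · rw [indicator_of_notMem hx]
    rw [Finset.sum_eq_zero]
    · simp
    · intro i _
      exact image_eq_zero_of_notMem_tsupport fun h => hx (hr (hsχ i h))

lemma lap_scale {N : ℕ} (φ : EuclideanSpace ℝ (Fin N) → ℝ) (hφ : ContDiff ℝ (⊤ : ℕ∞) φ)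
    (c : ℝ) (x : EuclideanSpace ℝ (Fin N)) :
    lap (fun y => φ (c • y)) x = c ^ 2 * lap φ (c • x) := by
  unfold lap
  rw [Finset.mul_sum]
  refine Finset.sum_congr rfl fun i _ => ?_
  have hg : ContDiff ℝ 2 (fun t : ℝ => φ (c • x + t • EuclideanSpace.single i (1:ℝ))) := by
    have : ContDiff ℝ 2 φ := contDiff_infty.1 hφ 2
    fun_prop
  have := congrFun (iteratedDeriv_comp_const_mul (n := 2) hg c) 0
  simp only [mul_zero] at this
  rw [← this]
  congr 1
  ext t
  simp [smul_add, smul_smul]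

lemma rpow_le_add_one (m : ℝ) (hm0 : 0 < m) (hm1 : m < 1) (y : ℝ) (hy : 0 ≤ y) :
    y ^ m ≤ y + 1 := by
  rcases le_total y 1 with h | h
  · have := Real.rpow_le_one hy h hm0.le
    linarith
  · have := Real.rpow_le_rpow_of_exponent_le h hm1.le
    rw [Real.rpow_one] at this
    linarith

lemma flux_abs (m : ℝ) (hm0 : 0 < m) (a : ℝ) : |(|a| ^ (m - 1) * a)| = |a| ^ m := by
  rcases eq_or_ne a 0 with rfl | h
  · simp [Real.zero_rpow hm0.ne']
  · have h' : 0 < |a| := abs_pos.2 h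
    rw [abs_mul, abs_of_nonneg (Real.rpow_nonneg h'.le _)]
    nth_rewrite 2 [← Real.rpow_one |a|]
    rw [← Real.rpow_add h']
    simp

lemma flux_le (m : ℝ) (hm0 : 0 < m) (hm1 : m < 1) (a L : ℝ) (hL : 0 < L) :
    |(|a| ^ (m - 1) * a)| ≤ L ^ (1 - m) * |a| + L ^ (1 - m) / L := by
  rw [flux_abs m hm0]
  have h := rpow_le_add_one m hm0 hm1 (L * |a|) (by positivity)
  rw [Real.mul_rpow hL.le (abs_nonneg a)] at h
  have e : L ^ (1 - m) = L / L ^ m := by rw [Real.rpow_sub hL, Real.rpow_one]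
  have hLm : 0 < L ^ m := Real.rpow_pos_of_pos hL m
  rw [e]
  have : |a| ^ m ≤ (L * |a| + 1) / L ^ m := by
    rw [le_div_iff₀ hLm]; linarith
  refine this.trans (le_of_eq ?_)
  field_simp

theorem stmt11 (N : ℕ) (hN : 1 ≤ N) (m : ℝ) (hm0 : 0 < m) (hm1 : m < 1)
    (hmN : 3 ≤ N → (N - 2 : ℝ) / N < m)
    (u : ℝ → EuclideanSpace ℝ (Fin N) → ℝ)
    (u0 : EuclideanSpace ℝ (Fin N) → ℝ) (hu0 : Integrable u0)
    -- u ∈ L^∞(0,∞;L¹(ℝ^N))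
    (hu_int : ∀ t > (0:ℝ), Integrable (u t))
    (hu_bdd : ∃ C : ℝ, ∀ t > (0:ℝ), (∫ x, |u t x|) ≤ C)
    (ℓ : ℝ → ℝ) (hℓ_nonneg : ∀ t, 0 ≤ ℓ t)
    (hℓ_loc : LocallyIntegrableOn ℓ (Ici 0))
    -- the weak formulation of ∂_t(k∗[u-u₀]) = Δ(|u|^{m-1}u)
    (hweak : ∀ φ : EuclideanSpace ℝ (Fin N) → ℝ, ContDiff ℝ (⊤ : ℕ∞) φ → HasCompactSupport φ →
      ∀ᵐ t : ℝ, 0 < t →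
        (∫ x, (u t x - u0 x) * φ x) =
          ∫ s in (0:ℝ)..t, ℓ (t - s) * ∫ x, |u s x| ^ (m - 1) * u s x * lap φ x) :
    ∀ᵐ t : ℝ, 0 < t → (∫ x, u t x) = ∫ x, u0 x := by
  obtain ⟨C, hC⟩ := hu_bdd
  let b : ContDiffBump (0 : EuclideanSpace ℝ (Fin N)) := ⟨1, 2, by norm_num, by norm_num⟩
  have hbd : ContDiff ℝ (⊤ : ℕ∞) (b : EuclideanSpace ℝ (Fin N) → ℝ) := b.contDiff
  obtain ⟨K, hK0, hK⟩ := lap_bound b hbd b.hasCompactSupport 2 b.tsupport_eq.subset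
  let R : ℕ → ℝ := fun n => (n : ℝ) + 1
  have hR0 : ∀ n, 0 < R n := fun n => by positivity
  have hRt : Filter.Tendsto R Filter.atTop Filter.atTop :=
    Filter.tendsto_atTop_add_const_right _ _ tendsto_natCast_atTop_atTop
  let φ : ℕ → EuclideanSpace ℝ (Fin N) → ℝ := fun n y => b ((R n)⁻¹ • y)
  have hφd : ∀ n, ContDiff ℝ (⊤ : ℕ∞) (φ n) := fun n => hbd.comp (contDiff_const_smul _)
  have hφc : ∀ n, HasCompactSupport (φ n) := fun n =>
    b.hasCompactSupport.comp_smul (inv_ne_zero (hR0 n).ne')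
  have hφt : ∀ x, Filter.Tendsto (fun n => φ n x) Filter.atTop (nhds 1) := by
    intro x
    have h1 : Filter.Tendsto (fun n => (R n)⁻¹ • x) Filter.atTop (nhds 0) := by
      simpa using (tendsto_inv_atTop_zero.comp hRt).smul_const x
    have h2 := (hbd.continuous.tendsto 0).comp h1
    have h3 : b 0 = 1 := b.one_of_mem_closedBall (Metric.mem_closedBall_self (by norm_num [b]))
    rw [h3] at h2
    exact h2
  set V : ℝ := volume.real (Metric.ball (0 : EuclideanSpace ℝ (Fin N)) 1) with hV
  -- the bound on the spatial integral
  let M : ℕ → ℝ := fun n => K * ((R n)⁻¹ ^ 2 * (R n ^ N) ^ (1 - m)) * (C + 2 ^ N * V)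
  have hG : ∀ n, ∀ s > 0, |∫ x, |u s x| ^ (m - 1) * u s x * lap (φ n) x| ≤ M n := by
    intro n s hs
    have hRn := hR0 n
    set L : ℝ := R n ^ N with hL
    have hLp : 0 < L := by positivity
    set B := Metric.closedBall (0 : EuclideanSpace ℝ (Fin N)) (2 * R n) with hB
    have hBm : MeasurableSet B := Metric.isClosed_closedBall.measurableSet
    have hBfin : volume B ≠ ⊤ := measure_closedBall_lt_top.ne
    have hBv : volume.real B = 2 ^ N * L * V := by
      rw [hB, Measure.real, Measure.addHaar_closedBall _ _ (by positivity), ENNReal.toReal_mul,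
        ENNReal.toReal_ofReal (by positivity)]
      simp [hV, Measure.real, mul_pow, hL]
    have hint1 : Integrable (fun x => L ^ (1 - m) * |u s x|) := (hu_int s hs).abs.const_mul _
    have hint2 : Integrable (B.indicator fun _ => L ^ (1 - m) / L) :=
      (integrable_indicator_iff hBm).2 (integrableOn_const hBfin)
    have key : ∀ x, ‖|u s x| ^ (m - 1) * u s x * lap (φ n) x‖ ≤
        K * (R n)⁻¹ ^ 2 * (L ^ (1 - m) * |u s x| + B.indicator (fun _ => L ^ (1 - m) / L) x) := by
      intro x
      rw [Real.norm_eq_abs, abs_mul, lap_scale b hbd, abs_mul ((R n)⁻¹ ^ 2), abs_of_nonneg (sq_nonneg (R n)⁻¹)]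
      have h1 := hK ((R n)⁻¹ • x)
      have h2 := flux_le m hm0 hm1 (u s x) L hLp
      by_cases hx : x ∈ B
      · rw [indicator_of_mem hx]
        have h3 : |lap b ((R n)⁻¹ • x)| ≤ K :=
          h1.trans (indicator_le_self' (fun _ _ => hK0) _)
        calc _ ≤ (L ^ (1 - m) * |u s x| + L ^ (1 - m) / L) * ((R n)⁻¹ ^ 2 * K) := by gcongr
          _ = _ := by ring
      · have hx' : (R n)⁻¹ • x ∉ Metric.closedBall (0 : EuclideanSpace ℝ (Fin N)) 2 := by
          rw [hB, mem_closedBall_zero_iff] at hx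
          rw [mem_closedBall_zero_iff, norm_smul, norm_inv, Real.norm_of_nonneg hRn.le,
            inv_mul_le_iff₀ hRn]
          linarith
        rw [indicator_of_notMem hx'] at h1
        have : |lap b ((R n)⁻¹ • x)| = 0 := le_antisymm h1 (abs_nonneg _)
        rw [this, indicator_of_notMem hx]
        simp only [mul_zero, add_zero]
        positivity
    have := norm_integral_le_of_norm_le ((hint1.add hint2).const_mul (K * (R n)⁻¹ ^ 2))
      (Filter.Eventually.of_forall key)
    rw [Real.norm_eq_abs] at this
    refine this.trans ?_
    simp only [Pi.add_apply]
    rw [integral_const_mul, integral_add hint1 hint2, integral_const_mul,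
      integral_indicator hBm, setIntegral_const, hBv]
    have e : (2 ^ N * L * V) • (L ^ (1 - m) / L) = L ^ (1 - m) * (2 ^ N * V) := by
      rw [smul_eq_mul]; field_simp
    rw [e, ← mul_add]
    calc _ ≤ K * (R n)⁻¹ ^ 2 * (L ^ (1 - m) * (C + 2 ^ N * V)) := by
          gcongr; exact hC s hs
      _ = M n := by simp only [M, ← hL]; ring
  have hM : Filter.Tendsto M Filter.atTop (nhds 0) := by
    have hexp : 0 < 2 - N * (1 - m) := by
      have hNp : (0:ℝ) < N := by exact_mod_cast hN
      rcases Nat.lt_or_ge N 3 with h | h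
      · have : (N : ℝ) ≤ 2 := by exact_mod_cast Nat.lt_succ_iff.1 h
        nlinarith
      · have := hmN h
        rw [div_lt_iff₀ hNp] at this
        nlinarith
    have h1 := (tendsto_rpow_neg_atTop hexp).comp hRt
    have h2 : ∀ n, (R n)⁻¹ ^ 2 * (R n ^ N) ^ (1 - m) = R n ^ (-(2 - N * (1 - m))) := by
      intro n
      have hRn := hR0 n
      rw [← Real.rpow_natCast (R n) N, ← Real.rpow_mul hRn.le, ← Real.rpow_neg_one,
        ← Real.rpow_natCast, ← Real.rpow_mul hRn.le, ← Real.rpow_add hRn]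
      congr 1
      push_cast
      ring
    have h3 := (h1.const_mul K).mul_const (C + 2 ^ N * V)
    simp only [mul_zero, zero_mul] at h3
    refine h3.congr fun n => ?_
    simp only [M, h2, Function.comp]
  have hall : ∀ᵐ t : ℝ, ∀ n, 0 < t →
        (∫ x, (u t x - u0 x) * φ n x) =
          ∫ s in (0:ℝ)..t, ℓ (t - s) * ∫ x, |u s x| ^ (m - 1) * u s x * lap (φ n) x :=
    ae_all_iff.2 fun n => hweak _ (hφd n) (hφc n)
  filter_upwards [hall] with t ht htpos
  have hd : Integrable (fun x => u t x - u0 x) := (hu_int t htpos).sub hu0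
  -- left-hand side
  have hl : Filter.Tendsto (fun n => ∫ x, (u t x - u0 x) * φ n x) Filter.atTop
      (nhds (∫ x, (u t x - u0 x))) := by
    refine tendsto_integral_of_dominated_convergence (fun x => |u t x - u0 x|)
      (fun n => hd.aestronglyMeasurable.mul (hφd n).continuous.aestronglyMeasurable) hd.abs ?_ ?_
    · intro n
      refine Filter.Eventually.of_forall fun x => ?_
      rw [norm_mul, Real.norm_eq_abs, Real.norm_of_nonneg b.nonneg]
      exact mul_le_of_le_one_right (abs_nonneg _) b.le_one
    · refine Filter.Eventually.of_forall fun x => ?_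
      simpa using (hφt x).const_mul (u t x - u0 x)
  -- right-hand side
  have hℓi : IntervalIntegrable ℓ volume 0 t := by
    rw [intervalIntegrable_iff_integrableOn_Icc_of_le htpos.le]
    exact hℓ_loc.integrableOn_compact_subset Icc_subset_Ici_self isCompact_Icc
  have hℓt : IntervalIntegrable (fun s => ℓ (t - s)) volume 0 t := by
    simpa using (hℓi.comp_sub_left t).symm
  have hr : Filter.Tendsto (fun n => ∫ x, (u t x - u0 x) * φ n x) Filter.atTop (nhds 0) := by
    have hz : Filter.Tendsto (fun n => (∫ s in (0:ℝ)..t, ℓ (t - s)) * M n) Filter.atTop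
        (nhds 0) := by simpa using hM.const_mul (∫ s in (0:ℝ)..t, ℓ (t - s))
    refine squeeze_zero_norm (fun n => ?_) hz
    rw [ht n htpos, ← intervalIntegral.integral_mul_const]
    refine intervalIntegral.norm_integral_le_of_norm_le htpos.le ?_ (hℓt.mul_const _)
    refine Filter.Eventually.of_forall fun s hs => ?_
    rw [norm_mul, Real.norm_of_nonneg (hℓ_nonneg _), Real.norm_eq_abs]
    exact mul_le_mul_of_nonneg_left (hG n s hs.1) (hℓ_nonneg _)
  have := tendsto_nhds_unique hl hr
  rw [integral_sub (hu_int t htpos) hu0] at this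
  linarith
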